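/- For an integer k ≥ 0, let n = 2k + 1 and consider the continued fraction of length 8k + 2 whose entry sequence consists of k copies of the block (1, 2, −1, 2), then the pair (1, 2), then k copies of the block (1, −2, 1, 2). Its denominator is nonzero and its value equals n + 1/(2n) = (2n² + 1)/(2n). -/

import Mathlib

/-!
The matrix of the block `(1, 2, -1, 2)` is minus an upper unipotent matrix, that of `(1, -2, 1, 2)`
is minus a lower unipotent one. Their `k`-th powers are therefore explicit, the two signs `(-1)^k`
cancel, and the whole product has first column `(8k² + 8k + 3, 4k + 2) = (2n² + 1, 2n)`.
-/

open Matrix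

def cfMat (a : ℤ) : Matrix (Fin 2) (Fin 2) ℤ := !![a, 1; 1, 0]

def cfProd (l : List ℤ) : Matrix (Fin 2) (Fin 2) ℤ := (l.map cfMat).prod

def cfNum (l : List ℤ) : ℤ := cfProd l 0 0

def cfDen (l : List ℤ) : ℤ := cfProd l 1 0

theorem cfProd_append (l m : List ℤ) : cfProd (l ++ m) = cfProd l * cfProd m := by
  simp [cfProd]

theorem cfProd_upper (k : ℕ) :
    cfProd (List.replicate k ([1, 2, -1, 2] : List ℤ)).flatten =
      (-1 : ℤ) ^ k • !![1, 2 * (k : ℤ); 0, 1] := by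
  induction k with
  | zero => simp [cfProd, Matrix.one_fin_two]
  | succ k ih =>
    have h : cfProd [1, 2, -1, 2] = !![-1, -2; 0, -1] := by
      simp [cfProd, cfMat]
    rw [List.replicate_succ, List.flatten_cons, cfProd_append, ih, h]
    ext i j
    fin_cases i <;> fin_cases j <;> simp [pow_succ] <;> ring

theorem cfProd_lower (k : ℕ) :
    cfProd (List.replicate k ([1, -2, 1, 2] : List ℤ)).flatten =
      (-1 : ℤ) ^ k • !![1, 0; 4 * (k : ℤ), 1] := by
  induction k with
  | zero => simp [cfProd, Matrix.one_fin_two]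
  | succ k ih =>
    have h : cfProd [1, -2, 1, 2] = !![-1, 0; -4, -1] := by
      simp [cfProd, cfMat]
    rw [List.replicate_succ, List.flatten_cons, cfProd_append, ih, h]
    ext i j
    fin_cases i <;> fin_cases j <;> simp [pow_succ] <;> ring

theorem stmt15 (k : ℕ) (n : ℕ) (hn : n = 2 * k + 1)
    (l : List ℤ)
    (hl : l = (List.replicate k ([1, 2, -1, 2] : List ℤ)).flatten ++
              ([1, 2] : List ℤ) ++
              (List.replicate k ([1, -2, 1, 2] : List ℤ)).flatten) :
    cfDen l ≠ 0 ∧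
      (cfNum l : ℚ) / (cfDen l : ℚ) = (2 * (n : ℚ) ^ 2 + 1) / (2 * n) := by
  have hM : cfProd [1, 2] = !![3, 1; 2, 1] := by
    simp [cfProd, cfMat]
  have hs : (-1 : ℤ) ^ k * (-1) ^ k = 1 := by
    rw [← mul_pow]; simp
  have hP : cfProd l = !![1, 2 * (k : ℤ); 0, 1] * !![3, 1; 2, 1] * !![1, 0; 4 * (k : ℤ), 1] := by
    rw [hl, cfProd_append, cfProd_append, cfProd_upper, cfProd_lower, hM, Matrix.smul_mul,
      Matrix.smul_mul, Matrix.mul_smul, smul_smul, hs, one_smul]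
  have hp : cfNum l = 2 * (n : ℤ) ^ 2 + 1 := by
    rw [cfNum, hP, hn]
    simp
    ring
  have hq : cfDen l = 2 * (n : ℤ) := by
    rw [cfDen, hP, hn]
    simp
    ring
  refine ⟨by rw [hq]; omega, ?_⟩
  rw [hp, hq]
  push_cast
  rfl
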